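/- Let a be a k×k Hermitian matrix with normalized trace τ(a) and variance σ(a)² = τ(a²) − τ(a)², and suppose L⁻·I ≤ a ≤ L⁺·I. For t ∈ (0,1], if every eigenvalue of a has multiplicity at most k(1−t), then t·[x] ≤ max{|tL⁺ + 2σ(a)√(t(1−t)) + (1−t)τ(a)|, |tL⁻ − 2σ(a)√(t(1−t)) + (1−t)τ(a)|} for every x in the support of μ_a^{⊞1/t}, where [x] denotes |x|; i.e., ‖a‖_(t) is bounded by this maximum. -/

import Mathlib

open MeasureTheory
open scoped ENNReal

/-- The Cauchy transform `G_μ(z) = ∫ 1/(z−ξ) dμ(ξ)` of a measure on `ℝ`. -/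
noncomputable def cauchyTransform (μ : Measure ℝ) (z : ℂ) : ℂ :=
  ∫ ξ, (z - (ξ : ℂ))⁻¹ ∂μ

/-- The reciprocal Cauchy transform `F_μ = 1/G_μ`. -/
noncomputable def recipCauchy (μ : Measure ℝ) (z : ℂ) : ℂ :=
  (cauchyTransform μ z)⁻¹

/-- `ν = μ^{⊞T}` in the sense of Belinschi–Bercovici subordination: there is an
analytic self-map `ω` of the upper half-plane with `F_ν = F_μ ∘ ω` and
`ω(z) = z/T + ((T−1)/T) F_ν(z)`. -/
def IsFreeConvPow (μ ν : Measure ℝ) (T : ℝ) : Prop :=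
  ∃ ω : ℂ → ℂ, AnalyticOn ℂ ω {z | 0 < z.im} ∧
    (∀ z : ℂ, 0 < z.im → 0 < (ω z).im) ∧
    (∀ z : ℂ, 0 < z.im → recipCauchy ν z = recipCauchy μ (ω z)) ∧
    (∀ z : ℂ, 0 < z.im → ω z = z / T + ((T - 1) / T) * recipCauchy ν z)

/-- The topological support of a measure on `ℝ`. -/
def measSupport (ν : Measure ℝ) : Set ℝ :=
  {x : ℝ | ∀ ε : ℝ, 0 < ε → 0 < ν (Set.Ioo (x - ε) (x + ε))}

/-!
Let `F = F_μ(w)` and `h(ξ) = F / (w - ξ) - 1` for `w` in the upper half-plane. Then `h` has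
`μ`-mean zero and, with `N = ∫ |h|² dμ`, one has `Im F = (1 + N) Im w`, while
`Re (w - F) - ∫ ξ dμ` is the covariance of `ξ` and `Re h`, hence at most `σ √N` in modulus.

If `w = ω(z)` is the subordinated point, then `z = w + (T - 1) (w - F)`. Taking imaginary parts,
`Im z = (1 - (T - 1) N) Im w`, so `(T - 1) N < 1`; taking real parts, `Re w` falls short of
`Re z - (T - 1) ∫ ξ dμ` by at most `σ √(T - 1)`. So if `μ` lives on `(-∞, L]` and `Re z` exceeds
`L + 2 σ √(T - 1) + (T - 1) ∫ ξ dμ` by `δ`, then `w` is at horizontal distance at least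
`d = σ √(T - 1) + δ` from `(-∞, L]`. There `d² N ≤ σ²`, which keeps `1 - (T - 1) N` away from
zero, and therefore `-Im G_ν(z) = -Im G_μ(w) = O(Im z)`: the measure `ν` has no mass near `Re z`.
Reflection gives the lower edge.
-/

open ProbabilityTheory Filter Topology
open scoped ComplexConjugate

lemma sq_covariance_le_variance_mul_variance {Ω : Type*} {mΩ : MeasurableSpace Ω} {P : Measure Ω}
    [IsFiniteMeasure P] {X Y : Ω → ℝ} (hX : MemLp X 2 P) (hY : MemLp Y 2 P) :
    cov[X, Y; P] ^ 2 ≤ Var[X; P] * Var[Y; P] := by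
  have quadratic_nonneg (c : ℝ) : 0 ≤ Var[Y; P] * (c * c) + 2 * cov[X, Y; P] * c + Var[X; P] := by
    have expand := variance_add hX (hY.const_smul c)
    rw [variance_smul, covariance_smul_right] at expand
    linarith [variance_nonneg (X + c • Y) P]
  have := discrim_le_zero quadratic_nonneg
  rw [discrim] at this
  linarith

lemma measure_eq_zero_of_frequently_measure_closedBall_le {α : Type*} [MetricSpace α]
    [SecondCountableTopology α] [HasBesicovitchCovering α] [MeasurableSpace α] [BorelSpace α]
    {ν ρ : Measure α} [SFinite ν] [IsLocallyFiniteMeasure ρ] {s : Set α} (hs : ρ s ≠ ∞)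
    (h : ∀ x ∈ s, ∀ ε : NNReal, 0 < ε →
      ∃ᶠ r in 𝓝[>] 0, ν (Metric.closedBall x r) ≤ ε * ρ (Metric.closedBall x r)) :
    ν s = 0 := by
  have le_mul (ε : NNReal) (hε : 0 < ε) : ν s ≤ ε * ρ s := by
    simpa using (Besicovitch.vitaliFamily ν).measure_le_of_frequently_le (ε • ρ)
      Measure.AbsolutelyContinuous.rfl s fun x hx ↦
        (Besicovitch.tendsto_filterAt ν x).frequently (by simpa using h x hx ε hε)
  by_contra hνs
  obtain ⟨ε, hε, hlt⟩ := ENNReal.exists_nnreal_pos_mul_lt hs hνs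
  exact (le_mul ε hε).not_gt hlt

section CauchyTransform

lemma sub_ofReal_ne_zero {w : ℂ} (hw : 0 < w.im) (ξ : ℝ) : w - ξ ≠ 0 := fun h ↦
  hw.ne' (by simpa using congrArg Complex.im h)

lemma norm_inv_sub_ofReal_le {w : ℂ} (hw : 0 < w.im) (ξ : ℝ) : ‖(w - ξ)⁻¹‖ ≤ w.im⁻¹ := by
  rw [norm_inv]
  have : |w.im| ≤ ‖w - ξ‖ := by simpa using Complex.abs_im_le_norm (w - ξ)
  exact inv_anti₀ hw ((le_abs_self _).trans this)

lemma neg_im_inv_sub_ofReal (w : ℂ) (ξ : ℝ) :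
    -((w - ξ)⁻¹).im = w.im / Complex.normSq (w - ξ) := by
  simp [Complex.inv_im, neg_div]

variable {ν : Measure ℝ} [IsFiniteMeasure ν] {w : ℂ}

lemma integrable_inv_sub_ofReal (hw : 0 < w.im) :
    Integrable (fun ξ : ℝ ↦ (w - ξ)⁻¹) ν :=
  .of_bound (by fun_prop) w.im⁻¹ (.of_forall (norm_inv_sub_ofReal_le hw))

lemma integrable_im_div_normSq_sub (hw : 0 < w.im) :
    Integrable (fun ξ : ℝ ↦ w.im / Complex.normSq (w - ξ)) ν := by
  simp only [← neg_im_inv_sub_ofReal]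
  exact (integrable_inv_sub_ofReal hw).im.neg

lemma neg_im_cauchyTransform (hw : 0 < w.im) :
    -(cauchyTransform ν w).im = ∫ ξ, w.im / Complex.normSq (w - ξ) ∂ν := by
  simp only [← neg_im_inv_sub_ofReal, integral_neg, cauchyTransform]
  exact congrArg Neg.neg (integral_im (integrable_inv_sub_ofReal hw)).symm

lemma neg_im_cauchyTransform_pos [NeZero ν] (hw : 0 < w.im) : 0 < -(cauchyTransform ν w).im := by
  have poisson_pos (ξ : ℝ) : 0 < w.im / Complex.normSq (w - ξ) :=
    div_pos hw (Complex.normSq_pos.2 (sub_ofReal_ne_zero hw ξ))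
  rw [neg_im_cauchyTransform hw, integral_pos_iff_support_of_nonneg
    (fun ξ ↦ (poisson_pos ξ).le) (integrable_im_div_normSq_sub hw),
    Set.eq_univ_of_forall (s := Function.support _) fun ξ ↦ (poisson_pos ξ).ne']
  exact NeZero.pos _

lemma cauchyTransform_ne_zero [NeZero ν] (hw : 0 < w.im) : cauchyTransform ν w ≠ 0 := fun h ↦
  (neg_im_cauchyTransform_pos (ν := ν) hw).ne' (by simp [h])

lemma neg_im_cauchyTransform_le [IsProbabilityMeasure ν] (hw : 0 < w.im) {d : ℝ} (hd : 0 < d)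
    (hsep : ∀ᵐ ξ ∂ν, d ≤ w.re - ξ) : -(cauchyTransform ν w).im ≤ w.im / d ^ 2 := by
  have poisson_le : ∀ᵐ ξ : ℝ ∂ν, w.im / Complex.normSq (w - ξ) ≤ w.im / d ^ 2 := by
    filter_upwards [hsep] with ξ hξ
    gcongr
    calc d ^ 2 ≤ (w.re - ξ) ^ 2 := by gcongr
      _ ≤ Complex.normSq (w - ξ) := by
        simpa [sq] using Complex.re_sq_le_normSq (w - ξ)
  rw [neg_im_cauchyTransform hw]
  simpa using integral_mono_ae (integrable_im_div_normSq_sub hw) (integrable_const _) poisson_le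

lemma measureReal_closedBall_le_neg_im_cauchyTransform (ν : Measure ℝ) [IsFiniteMeasure ν] (x : ℝ)
    {y : ℝ} (hy : 0 < y) :
    ν.real (Metric.closedBall x y) ≤ 2 * y * -(cauchyTransform ν ⟨x, y⟩).im := by
  have le_poisson (ξ : ℝ) : (Metric.closedBall x y).indicator (fun _ ↦ (2 * y)⁻¹) ξ
      ≤ y / Complex.normSq ((⟨x, y⟩ : ℂ) - ξ) := by
    have normSq_eq : Complex.normSq ((⟨x, y⟩ : ℂ) - ξ) = (x - ξ) ^ 2 + y ^ 2 := by
      simp [Complex.normSq_apply, sq]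
    rw [normSq_eq]
    refine Set.indicator_apply_le' (fun hξ ↦ ?_) fun _ ↦ by positivity
    have : (x - ξ) ^ 2 ≤ y ^ 2 := by
      rwa [sq_le_sq, abs_of_pos hy, ← Real.dist_eq, dist_comm]
    rw [inv_eq_one_div, div_le_div_iff₀ (by positivity) (by positivity)]
    linarith
  have integral_le :
      ν.real (Metric.closedBall x y) * (2 * y)⁻¹ ≤ -(cauchyTransform ν ⟨x, y⟩).im := by
    rw [neg_im_cauchyTransform hy, ← smul_eq_mul,
      ← integral_indicator_const _ Metric.isClosed_closedBall.measurableSet]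
    exact integral_mono ((integrable_const _).indicator Metric.isClosed_closedBall.measurableSet)
      (integrable_im_div_normSq_sub hy) le_poisson
  rwa [← div_eq_mul_inv, div_le_iff₀' (by positivity)] at integral_le

/-- Near `x`, the `ν`-measure of a ball of radius `y` is then `O(y²)`, negligible against its
length. -/
lemma notMem_measSupport_of_neg_im_cauchyTransform_le {x δ C : ℝ} (hδ : 0 < δ)
    (hC : ∀ z : ℂ, 0 < z.im → |z.re - x| < δ → -(cauchyTransform ν z).im ≤ C * z.im) :
    x ∉ measSupport ν := by
  refine fun hx ↦ (hx δ hδ).ne'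
    (measure_eq_zero_of_frequently_measure_closedBall_le (ρ := volume) (by simp) ?_)
  intro u hu ε hε
  have hux : |u - x| < δ := by rwa [← Real.dist_eq, ← Metric.mem_ball, Real.ball_eq_Ioo]
  have small : ∀ᶠ y in 𝓝[>] (0 : ℝ), C * y < ε :=
    (tendsto_nhdsWithin_of_tendsto_nhds <| Continuous.tendsto' (by fun_prop) 0 0 (by simp))
      |>.eventually_lt_const (by exact_mod_cast hε)
  refine Eventually.frequently ?_
  filter_upwards [small, self_mem_nhdsWithin] with y hCy (hy : 0 < y)
  rw [Real.volume_closedBall, ← ENNReal.ofReal_coe_nnreal, ← ENNReal.ofReal_mul (by positivity),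
    ← ofReal_measureReal]
  refine ENNReal.ofReal_le_ofReal ?_
  calc ν.real (Metric.closedBall u y) ≤ 2 * y * -(cauchyTransform ν ⟨u, y⟩).im :=
        measureReal_closedBall_le_neg_im_cauchyTransform ν u hy
    _ ≤ 2 * y * ε := by gcongr; exact (hC ⟨u, y⟩ hy hux).trans hCy.le
    _ = ε * (2 * y) := mul_comm _ _

end CauchyTransform

section ResolventDeviation

/-- The relative deviation `h(ξ) = (w - ξ)⁻¹ / G_μ(w) - 1` of the resolvent from its mean `G_μ(w)`;
the factor `1 / G_μ(w)` is written as `F_μ(w)`. -/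
noncomputable def resolventDeviation (μ : Measure ℝ) (w : ℂ) (ξ : ℝ) : ℂ :=
  recipCauchy μ w * (w - ξ)⁻¹ - 1

/-- The mean square `∫ |h|² dμ` of the resolvent deviation, which is the relative excess of
`Im F_μ(w)` over `Im w`. -/
noncomputable def resolventEnergy (μ : Measure ℝ) (w : ℂ) : ℝ :=
  ∫ ξ, Complex.normSq (resolventDeviation μ w ξ) ∂μ

variable {μ : Measure ℝ} {w : ℂ}

lemma resolventEnergy_nonneg : 0 ≤ resolventEnergy μ w :=
  integral_nonneg fun _ ↦ Complex.normSq_nonneg _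

lemma sub_mul_resolventDeviation (hw : 0 < w.im) (ξ : ℝ) :
    (w - ξ) * resolventDeviation μ w ξ = recipCauchy μ w - w + ξ := by
  have := sub_ofReal_ne_zero hw ξ
  rw [resolventDeviation]
  field_simp
  ring

lemma memLp_resolventDeviation [IsFiniteMeasure μ] (hw : 0 < w.im) (p : ℝ≥0∞) :
    MemLp (resolventDeviation μ w) p μ := by
  refine .of_bound (by unfold resolventDeviation; fun_prop) (‖recipCauchy μ w‖ * w.im⁻¹ + 1)
    (.of_forall fun ξ ↦ (norm_sub_le _ _).trans ?_)
  rw [norm_mul, norm_one]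
  gcongr
  exact norm_inv_sub_ofReal_le hw ξ

lemma integrable_resolventDeviation [IsFiniteMeasure μ] (hw : 0 < w.im) :
    Integrable (resolventDeviation μ w) μ :=
  memLp_one_iff_integrable.1 (memLp_resolventDeviation hw 1)

lemma integrable_normSq_resolventDeviation [IsFiniteMeasure μ] (hw : 0 < w.im) :
    Integrable (fun ξ ↦ Complex.normSq (resolventDeviation μ w ξ)) μ := by
  simpa only [Complex.normSq_eq_norm_sq] using
    (memLp_resolventDeviation hw 2).integrable_norm_pow two_ne_zero

lemma memLp_re_resolventDeviation [IsFiniteMeasure μ] (hw : 0 < w.im) (p : ℝ≥0∞) :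
    MemLp (fun ξ ↦ (resolventDeviation μ w ξ).re) p μ :=
  (memLp_resolventDeviation hw p).re

lemma integrable_re_mul_resolventDeviation [IsFiniteMeasure μ] (hw : 0 < w.im) (c : ℂ) :
    Integrable (fun ξ ↦ (c * resolventDeviation μ w ξ).re) μ :=
  ((integrable_resolventDeviation hw).const_mul c).re

lemma integrable_im_mul_resolventDeviation [IsFiniteMeasure μ] (hw : 0 < w.im) (c : ℂ) :
    Integrable (fun ξ ↦ (c * resolventDeviation μ w ξ).im) μ :=
  ((integrable_resolventDeviation hw).const_mul c).im

/-- Obtained by conjugating one factor of `|h|² = h * conj h` in `(w - ξ) h = F - w + ξ`. -/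
lemma conj_sub_mul_normSq_resolventDeviation (hw : 0 < w.im) (ξ : ℝ) :
    (conj w - ξ) * (Complex.normSq (resolventDeviation μ w ξ) : ℂ)
      = (conj (recipCauchy μ w - w) + w) * resolventDeviation μ w ξ
        - (recipCauchy μ w - w + ξ) := by
  have fluct := sub_mul_resolventDeviation (μ := μ) hw ξ
  have conj_fluct := congrArg conj fluct
  simp only [map_mul, map_sub, map_add, Complex.conj_ofReal] at conj_fluct
  rw [Complex.normSq_eq_conj_mul_self, map_sub]
  linear_combination resolventDeviation μ w ξ * conj_fluct - fluct

variable [IsProbabilityMeasure μ]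

lemma integral_resolventDeviation (hw : 0 < w.im) : ∫ ξ, resolventDeviation μ w ξ ∂μ = 0 := by
  simp only [resolventDeviation]
  rw [integral_sub ((integrable_inv_sub_ofReal hw).const_mul _) (integrable_const _),
    integral_const_mul, ← cauchyTransform, recipCauchy,
    inv_mul_cancel₀ (cauchyTransform_ne_zero hw)]
  simp

lemma integral_re_mul_resolventDeviation (hw : 0 < w.im) (c : ℂ) :
    ∫ ξ, (c * resolventDeviation μ w ξ).re ∂μ = 0 := by
  have := integral_re ((integrable_resolventDeviation (μ := μ) hw).const_mul c)
  simpa [integral_const_mul, integral_resolventDeviation hw] using this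

lemma integral_im_mul_resolventDeviation (hw : 0 < w.im) (c : ℂ) :
    ∫ ξ, (c * resolventDeviation μ w ξ).im ∂μ = 0 := by
  have := integral_im ((integrable_resolventDeviation (μ := μ) hw).const_mul c)
  simpa [integral_const_mul, integral_resolventDeviation hw] using this

lemma im_recipCauchy (hw : 0 < w.im) :
    (recipCauchy μ w).im = w.im * (1 + resolventEnergy μ w) := by
  have pointwise (ξ : ℝ) : w.im * Complex.normSq (resolventDeviation μ w ξ)
      = (recipCauchy μ w - w).im
        - ((conj (recipCauchy μ w - w) + w) * resolventDeviation μ w ξ).im := by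
    have := congrArg Complex.im (conj_sub_mul_normSq_resolventDeviation (μ := μ) hw ξ)
    rw [Complex.im_mul_ofReal, Complex.sub_im, Complex.sub_im, Complex.add_im (_ - w)] at this
    simp only [Complex.conj_im, Complex.ofReal_im] at this
    linarith
  have integrated : w.im * resolventEnergy μ w = (recipCauchy μ w - w).im := by
    rw [resolventEnergy, ← integral_const_mul]
    simp only [pointwise]
    rw [integral_sub (integrable_const _) (integrable_im_mul_resolventDeviation hw _),
      integral_im_mul_resolventDeviation hw]
    simp
  rw [Complex.sub_im] at integrated
  linarith

lemma integrable_re_mul_resolventDeviation_sub (hw : 0 < w.im) (hμ : Integrable id μ) (c : ℂ)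
    (a : ℝ) : Integrable (fun ξ : ℝ ↦ (c * resolventDeviation μ w ξ).re - (a + ξ)) μ :=
  (integrable_re_mul_resolventDeviation hw c).sub ((integrable_const a).add hμ)

lemma integral_re_mul_resolventDeviation_sub (hw : 0 < w.im) (hμ : Integrable id μ) (c : ℂ)
    (a : ℝ) : ∫ ξ, ((c * resolventDeviation μ w ξ).re - (a + ξ)) ∂μ = -a - ∫ ξ, ξ ∂μ := by
  have integrable_id : Integrable (fun ξ : ℝ ↦ ξ) μ := hμ
  have integrable_affine : Integrable (fun ξ : ℝ ↦ a + ξ) μ := (integrable_const a).add hμ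
  rw [integral_sub (integrable_re_mul_resolventDeviation hw c) integrable_affine,
    integral_re_mul_resolventDeviation hw, integral_add (integrable_const a) integrable_id,
    integral_const, probReal_univ, one_smul]
  ring

lemma mul_resolventEnergy_le (hw : 0 < w.im) (hμ : Integrable id μ) {d : ℝ}
    (hsep : ∀ᵐ ξ ∂μ, d ≤ w.re - ξ) :
    d * resolventEnergy μ w ≤ w.re - (recipCauchy μ w).re - ∫ ξ, ξ ∂μ := by
  have pointwise (ξ : ℝ) : (w.re - ξ) * Complex.normSq (resolventDeviation μ w ξ)
      = ((conj (recipCauchy μ w - w) + w) * resolventDeviation μ w ξ).re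
        - ((recipCauchy μ w - w).re + ξ) := by
    have := congrArg Complex.re (conj_sub_mul_normSq_resolventDeviation (μ := μ) hw ξ)
    rwa [Complex.re_mul_ofReal, Complex.sub_re, Complex.sub_re, Complex.add_re (_ - w),
      Complex.conj_re, Complex.ofReal_re] at this
  calc d * resolventEnergy μ w
      = ∫ ξ, d * Complex.normSq (resolventDeviation μ w ξ) ∂μ := (integral_const_mul _ _).symm
    _ ≤ ∫ ξ, ((conj (recipCauchy μ w - w) + w) * resolventDeviation μ w ξ).re
          - ((recipCauchy μ w - w).re + ξ) ∂μ := by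
        refine integral_mono_ae ((integrable_normSq_resolventDeviation hw).const_mul d)
          (integrable_re_mul_resolventDeviation_sub hw hμ _ _) ?_
        filter_upwards [hsep] with ξ hξ
        rw [← pointwise]
        exact mul_le_mul_of_nonneg_right hξ (Complex.normSq_nonneg _)
    _ = w.re - (recipCauchy μ w).re - ∫ ξ, ξ ∂μ := by
        rw [integral_re_mul_resolventDeviation_sub hw hμ, Complex.sub_re, neg_sub]

lemma covariance_id_re_resolventDeviation (hw : 0 < w.im) (hμ : MemLp id 2 μ) :
    cov[id, fun ξ ↦ (resolventDeviation μ w ξ).re; μ]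
      = w.re - (recipCauchy μ w).re - ∫ ξ, ξ ∂μ := by
  have pointwise (ξ : ℝ) : ξ * (resolventDeviation μ w ξ).re
      = (w * resolventDeviation μ w ξ).re - ((recipCauchy μ w - w).re + ξ) := by
    have := congrArg Complex.re (sub_mul_resolventDeviation (μ := μ) hw ξ)
    rw [sub_mul, Complex.sub_re, Complex.re_ofReal_mul, Complex.add_re, Complex.ofReal_re] at this
    linarith
  have mean_zero : ∫ ξ, (resolventDeviation μ w ξ).re ∂μ = 0 := by
    simpa using integral_re_mul_resolventDeviation (μ := μ) hw 1
  rw [covariance_eq_sub hμ (memLp_re_resolventDeviation hw 2), mean_zero, mul_zero, sub_zero]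
  simp only [Pi.mul_apply, id_eq, pointwise]
  rw [integral_re_mul_resolventDeviation_sub hw (hμ.integrable one_le_two), Complex.sub_re, neg_sub]

lemma variance_re_resolventDeviation_le (hw : 0 < w.im) :
    Var[fun ξ ↦ (resolventDeviation μ w ξ).re; μ] ≤ resolventEnergy μ w := by
  have memLp_re := memLp_re_resolventDeviation (μ := μ) hw 2
  refine (variance_le_expectation_sq memLp_re.aestronglyMeasurable).trans ?_
  refine integral_mono memLp_re.integrable_sq (integrable_normSq_resolventDeviation hw) fun ξ ↦ ?_
  simpa [sq] using Complex.re_sq_le_normSq (resolventDeviation μ w ξ)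

lemma sq_re_sub_recipCauchy_sub_integral_le (hw : 0 < w.im) (hμ : MemLp id 2 μ) :
    (w.re - (recipCauchy μ w).re - ∫ ξ, ξ ∂μ) ^ 2 ≤ Var[id; μ] * resolventEnergy μ w := by
  rw [← covariance_id_re_resolventDeviation hw hμ]
  refine (sq_covariance_le_variance_mul_variance hμ (memLp_re_resolventDeviation hw 2)).trans ?_
  gcongr
  · exact variance_nonneg _ _
  · exact variance_re_resolventDeviation_le hw

lemma sq_mul_resolventEnergy_le_variance (hw : 0 < w.im) (hμ : MemLp id 2 μ) {d : ℝ} (hd : 0 ≤ d)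
    (hsep : ∀ᵐ ξ ∂μ, d ≤ w.re - ξ) : d ^ 2 * resolventEnergy μ w ≤ Var[id; μ] := by
  rcases (resolventEnergy_nonneg (μ := μ) (w := w)).eq_or_lt with henergy | henergy
  · simp [← henergy, variance_nonneg]
  refine le_of_mul_le_mul_right ?_ henergy
  calc d ^ 2 * resolventEnergy μ w * resolventEnergy μ w
      = (d * resolventEnergy μ w) ^ 2 := by ring
    _ ≤ (w.re - (recipCauchy μ w).re - ∫ ξ, ξ ∂μ) ^ 2 := by
        gcongr
        exact mul_resolventEnergy_le hw (hμ.integrable one_le_two) hsep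
    _ ≤ Var[id; μ] * resolventEnergy μ w := sq_re_sub_recipCauchy_sub_integral_le hw hμ

lemma sub_one_mul_re_sub_recipCauchy_sub_integral_le (hw : 0 < w.im) (hμ : MemLp id 2 μ) {T : ℝ}
    (hT : 1 ≤ T) (henergy : (T - 1) * resolventEnergy μ w ≤ 1) :
    (T - 1) * (w.re - (recipCauchy μ w).re - ∫ ξ, ξ ∂μ) ≤ √Var[id; μ] * √(T - 1) := by
  have hT' : 0 ≤ T - 1 := sub_nonneg.2 hT
  have hvar := variance_nonneg id μ
  rw [← Real.sqrt_mul hvar]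
  apply Real.le_sqrt_of_sq_le
  calc ((T - 1) * (w.re - (recipCauchy μ w).re - ∫ ξ, ξ ∂μ)) ^ 2
      = (T - 1) ^ 2 * (w.re - (recipCauchy μ w).re - ∫ ξ, ξ ∂μ) ^ 2 := mul_pow _ _ _
    _ ≤ (T - 1) ^ 2 * (Var[id; μ] * resolventEnergy μ w) := by
        gcongr
        exact sq_re_sub_recipCauchy_sub_integral_le hw hμ
    _ = Var[id; μ] * (T - 1) * ((T - 1) * resolventEnergy μ w) := by ring
    _ ≤ Var[id; μ] * (T - 1) := mul_le_of_le_one_right (mul_nonneg hvar hT') henergy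

end ResolventDeviation

namespace IsFreeConvPow

variable {μ ν : Measure ℝ} {T : ℝ}

lemma exists_subordination [IsProbabilityMeasure μ] (hν : IsFreeConvPow μ ν T) (hT : T ≠ 0)
    {z : ℂ} (hz : 0 < z.im) :
    ∃ w : ℂ, 0 < w.im ∧ cauchyTransform ν z = cauchyTransform μ w ∧
      z.re = w.re + (T - 1) * (w.re - (recipCauchy μ w).re) ∧
      z.im = w.im * (1 - (T - 1) * resolventEnergy μ w) := by
  obtain ⟨ω, -, ω_im_pos, recipCauchy_eq, ω_eq⟩ := hν
  have hw := ω_im_pos z hz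
  have z_eq : z = ω z + (T - 1 : ℝ) * (ω z - recipCauchy μ (ω z)) := by
    have hTc : (T : ℂ) ≠ 0 := by exact_mod_cast hT
    have hω := ω_eq z hz
    rw [recipCauchy_eq z hz] at hω
    field_simp at hω
    push_cast
    linear_combination -hω
  refine ⟨ω z, hw, inv_inj.1 (recipCauchy_eq z hz), ?_, ?_⟩
  · simpa only [Complex.add_re, Complex.re_ofReal_mul, Complex.sub_re] using
      congrArg Complex.re z_eq
  · have := congrArg Complex.im z_eq
    rw [Complex.add_im, Complex.im_ofReal_mul, Complex.sub_im, im_recipCauchy hw] at this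
    linarith

lemma neg_im_cauchyTransform_le [IsProbabilityMeasure μ] (hν : IsFreeConvPow μ ν T)
    (hT : 1 ≤ T) (hμ : MemLp id 2 μ) {L d : ℝ} (hL : ∀ᵐ ξ ∂μ, ξ ≤ L)
    (hd : √Var[id; μ] * √(T - 1) < d) {z : ℂ} (hz : 0 < z.im)
    (hzre : L + √Var[id; μ] * √(T - 1) + (T - 1) * ∫ ξ, ξ ∂μ + d ≤ z.re) :
    -(cauchyTransform ν z).im ≤ (d ^ 2 - Var[id; μ] * (T - 1))⁻¹ * z.im := by
  obtain ⟨w, hw, cauchy_eq, z_re, z_im⟩ := hν.exists_subordination (by positivity) hz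
  have hT' : 0 ≤ T - 1 := sub_nonneg.2 hT
  have hd0 : 0 < d := hd.trans_le' (by positivity)
  have gap_pos : 0 < d ^ 2 - Var[id; μ] * (T - 1) := by
    rw [sub_pos]
    rwa [← Real.sqrt_mul (variance_nonneg id μ), Real.sqrt_lt' hd0] at hd
  have energy_lt : (T - 1) * resolventEnergy μ w < 1 :=
    sub_pos.1 (pos_of_mul_pos_right (z_im ▸ hz) hw.le)
  have w_re_ge : L + d ≤ w.re := by
    linarith [sub_one_mul_re_sub_recipCauchy_sub_integral_le hw hμ hT energy_lt.le]
  have hsep : ∀ᵐ ξ ∂μ, d ≤ w.re - ξ := hL.mono fun ξ hξ ↦ by linarith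
  have im_bound : w.im * (d ^ 2 - Var[id; μ] * (T - 1)) ≤ d ^ 2 * z.im := by
    rw [z_im, mul_left_comm]
    gcongr
    nlinarith [mul_le_mul_of_nonneg_left (sq_mul_resolventEnergy_le_variance hw hμ hd0.le hsep) hT']
  calc -(cauchyTransform ν z).im = -(cauchyTransform μ w).im := by rw [cauchy_eq]
    _ ≤ w.im / d ^ 2 := _root_.neg_im_cauchyTransform_le hw hd0 hsep
    _ ≤ (d ^ 2 - Var[id; μ] * (T - 1))⁻¹ * z.im := by
        rwa [inv_mul_eq_div, div_le_div_iff₀ (by positivity) gap_pos, mul_comm z.im]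

lemma le_of_mem_measSupport [IsProbabilityMeasure μ] [IsFiniteMeasure ν]
    (hν : IsFreeConvPow μ ν T) (hT : 1 ≤ T) (hμ : MemLp id 2 μ) {L : ℝ} (hL : ∀ᵐ ξ ∂μ, ξ ≤ L)
    {x : ℝ} (hx : x ∈ measSupport ν) :
    x ≤ L + 2 * (√Var[id; μ] * √(T - 1)) + (T - 1) * ∫ ξ, ξ ∂μ := by
  by_contra! hlt
  obtain ⟨δ, hδ, hδx⟩ : ∃ δ > 0,
      L + 2 * (√Var[id; μ] * √(T - 1)) + (T - 1) * ∫ ξ, ξ ∂μ + 2 * δ = x :=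
    ⟨(x - (L + 2 * (√Var[id; μ] * √(T - 1)) + (T - 1) * ∫ ξ, ξ ∂μ)) / 2, by linarith, by ring⟩
  refine notMem_measSupport_of_neg_im_cauchyTransform_le hδ (fun z hz hzx ↦
    hν.neg_im_cauchyTransform_le hT hμ hL (d := √Var[id; μ] * √(T - 1) + δ) (by linarith) hz ?_) hx
  linarith [neg_lt_of_abs_lt hzx]

end IsFreeConvPow

lemma integral_measure_neg {E : Type*} [NormedAddCommGroup E] [NormedSpace ℝ E] (μ : Measure ℝ)
    (f : ℝ → E) : ∫ ξ, f ξ ∂μ.neg = ∫ ξ, f (-ξ) ∂μ :=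
  integral_map_equiv (MeasurableEquiv.neg ℝ) f

lemma variance_id_measure_neg (μ : Measure ℝ) : Var[id; μ.neg] = Var[id; μ] :=
  (variance_map_equiv id (MeasurableEquiv.neg ℝ)).trans variance_neg

lemma cauchyTransform_measure_neg (μ : Measure ℝ) (z : ℂ) :
    cauchyTransform μ.neg z = -conj (cauchyTransform μ (-conj z)) := by
  rw [cauchyTransform, cauchyTransform, integral_measure_neg, ← integral_conj, ← integral_neg]
  refine integral_congr_ae (.of_forall fun ξ ↦ ?_)
  simp only [map_inv₀, map_sub, map_neg, Complex.conj_conj, Complex.conj_ofReal, ← inv_neg]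
  push_cast
  ring

lemma recipCauchy_measure_neg (μ : Measure ℝ) (z : ℂ) :
    recipCauchy μ.neg z = -conj (recipCauchy μ (-conj z)) := by
  simp only [recipCauchy, cauchyTransform_measure_neg, map_inv₀, inv_neg]

lemma neg_mem_measSupport_neg {ν : Measure ℝ} {x : ℝ} (hx : x ∈ measSupport ν) :
    -x ∈ measSupport ν.neg := by
  intro ε hε
  rw [Measure.neg_apply, Set.neg_Ioo]
  simpa [add_comm, sub_eq_add_neg] using hx ε hε

namespace IsFreeConvPow

variable {μ ν : Measure ℝ} {T : ℝ}

lemma neg (hν : IsFreeConvPow μ ν T) : IsFreeConvPow μ.neg ν.neg T := by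
  obtain ⟨ω, ω_analytic, ω_im_pos, recipCauchy_eq, ω_eq⟩ := hν
  have upper_half_open : IsOpen {z : ℂ | 0 < z.im} :=
    isOpen_lt continuous_const Complex.continuous_im
  have im_neg_conj {z : ℂ} (hz : 0 < z.im) : 0 < (-conj z).im := by simpa using hz
  refine ⟨fun z ↦ -conj (ω (-conj z)), ?_, fun z hz ↦ ?_, fun z hz ↦ ?_, fun z hz ↦ ?_⟩
  · rw [Complex.analyticOn_iff_differentiableOn upper_half_open] at ω_analytic ⊢
    intro z hz
    have ω_diff : DifferentiableAt ℂ (fun u ↦ ω (-u)) (conj z) :=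
      (ω_analytic.differentiableAt (upper_half_open.mem_nhds (im_neg_conj hz))).comp _
        differentiableAt_id.neg
    have := ω_diff.conj_conj.neg
    rw [Complex.conj_conj] at this
    exact this.differentiableWithinAt
  · simpa using ω_im_pos (-conj z) (im_neg_conj hz)
  · simp [recipCauchy_measure_neg, recipCauchy_eq (-conj z) (im_neg_conj hz)]
  · simp only [recipCauchy_measure_neg, ω_eq (-conj z) (im_neg_conj hz), map_add, map_mul, map_div₀,
      map_sub, map_neg, map_one, Complex.conj_conj, Complex.conj_ofReal]
    ring

lemma ge_of_mem_measSupport [IsProbabilityMeasure μ] [IsFiniteMeasure ν]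
    (hν : IsFreeConvPow μ ν T) (hT : 1 ≤ T) (hμ : MemLp id 2 μ) {L : ℝ} (hL : ∀ᵐ ξ ∂μ, L ≤ ξ)
    {x : ℝ} (hx : x ∈ measSupport ν) :
    L - 2 * (√Var[id; μ] * √(T - 1)) + (T - 1) * ∫ ξ, ξ ∂μ ≤ x := by
  have : IsProbabilityMeasure μ.neg :=
    Measure.isProbabilityMeasure_map measurable_neg.aemeasurable
  have : IsFiniteMeasure ν.neg := Measure.isFiniteMeasure_map ν Neg.neg
  have memLp_neg : MemLp id 2 μ.neg :=
    (memLp_map_measure_iff aestronglyMeasurable_id measurable_neg.aemeasurable).2 hμ.neg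
  have neg_le_neg_L : ∀ᵐ ξ ∂μ.neg, ξ ≤ -L :=
    (ae_map_iff measurable_neg.aemeasurable measurableSet_Iic).2 (hL.mono fun _ ↦ neg_le_neg)
  have reflected :=
    hν.neg.le_of_mem_measSupport hT memLp_neg neg_le_neg_L (neg_mem_measSupport_neg hx)
  rw [variance_id_measure_neg, integral_measure_neg, integral_neg] at reflected
  linarith

end IsFreeConvPow

section EmpiricalMeasure

variable {ι X : Type*} [Fintype ι] [MeasurableSpace X]

/-- The empirical measure `(1/|ι|) ∑ᵢ δ_{s i}` of a finite family of points; it is `0` when `ι`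
is empty. Applied to the eigenvalues of a Hermitian matrix it is the spectral measure `μ_a`. -/
noncomputable def empiricalMeasure (s : ι → X) : Measure X :=
  (Fintype.card ι : ℝ≥0∞)⁻¹ • ∑ i, Measure.dirac (s i)

lemma ae_empiricalMeasure_of_forall [MeasurableSingletonClass X] {s : ι → X} {p : X → Prop}
    (hp : ∀ i, p (s i)) : ∀ᵐ x ∂empiricalMeasure s, p x := by
  refine Measure.ae_smul_measure (ae_finsetSum_measure_iff.2 fun i _ ↦ ?_) _
  simpa using hp i

lemma integral_empiricalMeasure [MeasurableSingletonClass X] {E : Type*} [NormedAddCommGroup E]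
    [NormedSpace ℝ E] [CompleteSpace E] (s : ι → X) (f : X → E) :
    ∫ x, f x ∂empiricalMeasure s = (Fintype.card ι : ℝ)⁻¹ • ∑ i, f (s i) := by
  rw [empiricalMeasure, integral_smul_measure,
    integral_finsetSum_measure fun i _ ↦ integrable_dirac (by simp)]
  simp only [integral_dirac, ENNReal.toReal_inv, ENNReal.toReal_natCast]

variable [Nonempty ι]

instance (s : ι → X) : IsProbabilityMeasure (empiricalMeasure s) where
  measure_univ := by simp [empiricalMeasure, ENNReal.inv_mul_cancel]

lemma variance_id_empiricalMeasure (s : ι → ℝ) :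
    Var[id; empiricalMeasure s]
      = (Fintype.card ι : ℝ)⁻¹ * ∑ i, s i ^ 2 - ((Fintype.card ι : ℝ)⁻¹ * ∑ i, s i) ^ 2 := by
  have memLp_id : MemLp id 2 (empiricalMeasure s) :=
    .of_bound aestronglyMeasurable_id (∑ i, ‖s i‖) <| ae_empiricalMeasure_of_forall fun i ↦
      Finset.single_le_sum (f := fun i ↦ ‖s i‖) (fun _ _ ↦ norm_nonneg _) (Finset.mem_univ i)
  simp [variance_eq_sub memLp_id, integral_empiricalMeasure]

end EmpiricalMeasure

theorem stmt_10_general {μ ν : Measure ℝ} [IsProbabilityMeasure μ] [IsFiniteMeasure ν]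
    {Lm Lp t : ℝ} (hbd : ∀ᵐ ξ ∂μ, Lm ≤ ξ ∧ ξ ≤ Lp) (ht : 0 < t) (ht1 : t ≤ 1)
    (hν : IsFreeConvPow μ ν (1 / t)) :
    ∀ x ∈ measSupport ν,
      t * |x| ≤ max |t * Lp + 2 * √Var[id; μ] * √(t * (1 - t)) + (1 - t) * ∫ ξ, ξ ∂μ|
        |t * Lm - 2 * √Var[id; μ] * √(t * (1 - t)) + (1 - t) * ∫ ξ, ξ ∂μ| := by
  intro x hx
  have hT : 1 ≤ 1 / t := one_le_one_div ht ht1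
  have hμ : MemLp id 2 μ := memLp_of_bounded hbd aestronglyMeasurable_id 2
  have t_mul_sub_one : t * (1 / t - 1) = 1 - t := by field_simp
  have t_mul_sqrt : t * √(1 / t - 1) = √(t * (1 - t)) := by
    rw [← t_mul_sub_one, ← mul_assoc, Real.sqrt_mul (by positivity), Real.sqrt_mul_self ht.le]
  have upper := mul_le_mul_of_nonneg_left
    (hν.le_of_mem_measSupport hT hμ (hbd.mono fun _ h ↦ h.2) hx) ht.le
  have lower := mul_le_mul_of_nonneg_left
    (hν.ge_of_mem_measSupport hT hμ (hbd.mono fun _ h ↦ h.1) hx) ht.le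
  rw [← abs_of_pos ht, ← abs_mul, abs_of_pos ht, max_comm]
  refine abs_le_max_abs_abs ?_ ?_
  · linear_combination lower + 2 * √Var[id; μ] * t_mul_sqrt - (∫ ξ, ξ ∂μ) * t_mul_sub_one
  · linear_combination upper + 2 * √Var[id; μ] * t_mul_sqrt + (∫ ξ, ξ ∂μ) * t_mul_sub_one

/-- Theorem 2.7(1) of the paper: for a Hermitian `a` with `L⁻ ≤ a ≤ L⁺`, if every
eigenvalue of `a` has multiplicity at most `k(1−t)`, then every point `x` of the
support of `μ_a^{⊞1/t}` satisfies
`t|x| ≤ max{|tL⁺ + 2σ(a)√(t(1−t)) + (1−t)τ(a)|, |tL⁻ − 2σ(a)√(t(1−t)) + (1−t)τ(a)|}`;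
that is, `‖a‖_(t)` is bounded by this maximum. -/
theorem stmt_10 (k : ℕ) (hk : 0 < k) (a : Matrix (Fin k) (Fin k) ℂ)
    (ha : a.IsHermitian) (Lm Lp t : ℝ)
    (hbd : ∀ i, Lm ≤ ha.eigenvalues i ∧ ha.eigenvalues i ≤ Lp)
    (ht : 0 < t) (ht1 : t ≤ 1)
    (hmult : ∀ ξ : ℝ,
      ((Finset.univ.filter fun j => ha.eigenvalues j = ξ).card : ℝ) ≤ k * (1 - t))
    (μ ν : Measure ℝ) [IsProbabilityMeasure ν]
    (hμ : μ = (k : ℝ≥0∞)⁻¹ • ∑ i : Fin k, Measure.dirac (ha.eigenvalues i))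
    (hν : IsFreeConvPow μ ν (1 / t)) :
    ∀ x ∈ measSupport ν,
      t * |x| ≤
        max |t * Lp + 2 * Real.sqrt (((k : ℝ)⁻¹ * ∑ i, (ha.eigenvalues i) ^ 2
                - ((k : ℝ)⁻¹ * ∑ i, ha.eigenvalues i) ^ 2)) * Real.sqrt (t * (1 - t))
              + (1 - t) * ((k : ℝ)⁻¹ * ∑ i, ha.eigenvalues i)|
            |t * Lm - 2 * Real.sqrt (((k : ℝ)⁻¹ * ∑ i, (ha.eigenvalues i) ^ 2
                - ((k : ℝ)⁻¹ * ∑ i, ha.eigenvalues i) ^ 2)) * Real.sqrt (t * (1 - t))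
              + (1 - t) * ((k : ℝ)⁻¹ * ∑ i, ha.eigenvalues i)| := by
  have : Nonempty (Fin k) := ⟨⟨0, hk⟩⟩
  obtain rfl : μ = empiricalMeasure ha.eigenvalues := by
    rw [hμ, empiricalMeasure, Fintype.card_fin]
  simpa only [variance_id_empiricalMeasure, integral_empiricalMeasure, Fintype.card_fin,
    smul_eq_mul] using stmt_10_general (ae_empiricalMeasure_of_forall hbd) ht ht1 hν
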